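/- arXiv:0909.2534 — 2 statements merged into one kernel-verified Lean document; each statement's English description precedes it below -/
import Mathlib

section
/- The composite of two mergers between nested graphs is a merger. -/
open CategoryTheory

universe v u

/-- A morphism in a category is an identity morphism (up to `eqToHom`). -/
def IsId {C : Type u} [Category.{v} C] {A B : C} (f : A ⟶ B) : Prop :=
  ∃ h : A = B, f = eqToHom h

/-- A flag in a nested graph is a non-identity morphism. -/
def IsFlag {C : Type u} [Category.{v} C] {A B : C} (f : A ⟶ B) : Prop :=
  ¬ IsId f

/-- An irreducible flag is a flag that cannot be written as the composite of two flags. -/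
def IsIrred {C : Type u} [Category.{v} C] {A B : C} (f : A ⟶ B) : Prop :=
  IsFlag f ∧ ¬ ∃ (X : C) (g : A ⟶ X) (h : X ⟶ B), IsFlag g ∧ IsFlag h ∧ g ≫ h = f

/-- A grading: a functor to the finite ordinal `Fin n` (viewed as a preorder category)
sending every non-identity morphism to a non-identity morphism. -/
def IsGrading {C : Type u} [Category.{v} C] {n : ℕ} (G : C ⥤ Fin n) : Prop :=
  ∀ ⦃A B : C⦄ (f : A ⟶ B), IsFlag f → IsFlag (G.map f)

/-- A nested graph: a category admitting a grading into some finite ordinal. -/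
def IsNestedGraph (C : Type u) [Category.{v} C] : Prop :=
  ∃ (n : ℕ) (G : C ⥤ Fin n), IsGrading G

/-- A functor `φ` contracts a flag `f` if `φ.map f` is an identity. -/
def Contracts {C D : Type u} [Category.{v} C] [Category.{v} D]
    (φ : C ⥤ D) {A B : C} (f : A ⟶ B) : Prop :=
  IsId (φ.map f)

/-- An admissible functor: it maps irreducible flags to identities or irreducible flags,
and whenever it contracts an irreducible flag with domain `A`, it contracts every
irreducible flag with domain `A`. -/
def IsAdmissible {C D : Type u} [Category.{v} C] [Category.{v} D] (φ : C ⥤ D) : Prop :=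
  (∀ ⦃A B : C⦄ (f : A ⟶ B), IsIrred f → IsId (φ.map f) ∨ IsIrred (φ.map f)) ∧
  (∀ ⦃A B B' : C⦄ (f : A ⟶ B) (g : A ⟶ B'), IsIrred f → IsIrred g →
      Contracts φ f → Contracts φ g)

/-- The morphisms of the codomain generated by the image of a functor. -/
inductive GenBy {C D : Type u} [Category.{v} C] [Category.{v} D] (φ : C ⥤ D) :
    ∀ {X Y : D}, (X ⟶ Y) → Prop
  | id (X : D) : GenBy φ (𝟙 X)
  | map {A B : C} (f : A ⟶ B) : GenBy φ (φ.map f)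
  | comp {X Y Z : D} (f : X ⟶ Y) (g : Y ⟶ Z) :
      GenBy φ f → GenBy φ g → GenBy φ (f ≫ g)

/-- An epi-functor: its image generates the codomain. -/
def IsEpiFunctor {C D : Type u} [Category.{v} C] [Category.{v} D] (φ : C ⥤ D) : Prop :=
  Function.Surjective φ.obj ∧ ∀ ⦃X Y : D⦄ (f : X ⟶ Y), GenBy φ f

/-- `μ : C ⥤ D` exhibits `D` as the quotient of `C` identifying `r`-related objects,
with morphisms freely generated by the morphisms of `C` subject to the composition
relations of `C` (expressed via the universal property). -/
def IsQuotientBy {C D : Type u} [Category.{v} C] [Category.{v} D]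
    (r : C → C → Prop) (μ : C ⥤ D) : Prop :=
  (∀ A B : C, μ.obj A = μ.obj B ↔ Relation.EqvGen r A B) ∧
  Function.Surjective μ.obj ∧
  (∀ ⦃X Y : D⦄ (f : X ⟶ Y), GenBy μ f) ∧
  (∀ (E : Type u) [Category.{v} E] (F : C ⥤ E),
      (∀ A B : C, r A B → F.obj A = F.obj B) → ∃! F' : D ⥤ E, μ ⋙ F' = F)

/-- A merger: an admissible epi-functor exhibiting its codomain as the quotient of its
domain by an equivalence relation on objects, with morphisms freely generated subject to
the composition relations of the domain. -/
def IsMerger {C D : Type u} [Category.{v} C] [Category.{v} D] (μ : C ⥤ D) : Prop :=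
  IsAdmissible μ ∧ IsEpiFunctor μ ∧
    ∃ r : C → C → Prop, Equivalence r ∧ IsQuotientBy r μ

/-- `A` is a vertex of its fiber under `φ`: it is not the domain of any flag
contracted by `φ`. -/
def IsVertexOver {C D : Type u} [Category.{v} C] [Category.{v} D]
    (φ : C ⥤ D) (A : C) : Prop :=
  ∀ ⦃B : C⦄ (f : A ⟶ B), Contracts φ f → IsId f

/-- `A₁` is a vertex of the fiber of `φ` over `A₂`. -/
def IsFiberVertex {C D : Type u} [Category.{v} C] [Category.{v} D]
    (φ : C ⥤ D) (A₂ : D) (A₁ : C) : Prop :=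
  φ.obj A₁ = A₂ ∧ IsVertexOver φ A₁

/-- A contraction: an admissible epi-functor each of whose fibers is a corolla,
i.e. has a unique vertex. -/
def IsContraction {C D : Type u} [Category.{v} C] [Category.{v} D] (κ : C ⥤ D) : Prop :=
  IsAdmissible κ ∧ IsEpiFunctor κ ∧ ∀ A₂ : D, ∃! A₁ : C, IsFiberVertex κ A₂ A₁

/-- The canonical merger relation of `φ`: it relates distinct objects `A ≠ B` exactly when
`φ A = φ B` and both `A` and `B` are vertices of the fiber of `φ` over `φ A`. -/
def mergerRel {C D : Type u} [Category.{v} C] [Category.{v} D] (φ : C ⥤ D) :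
    C → C → Prop :=
  fun A B => A ≠ B ∧ φ.obj A = φ.obj B ∧ IsVertexOver φ A ∧ IsVertexOver φ B

/-- A canonical merger–contraction decomposition of `φ`: the merger part is the quotient
of the domain identifying, within each fiber of `φ`, all objects that are vertices of that
fiber. -/
def IsCanonicalDecomp {C P D : Type u} [Category.{v} C] [Category.{v} P] [Category.{v} D]
    (φ : C ⥤ D) (μ : C ⥤ P) (κ : P ⥤ D) : Prop :=
  IsQuotientBy (mergerRel φ) μ ∧ μ ⋙ κ = φ

/-- Two merger–contraction pairs are equal as morphisms of nested graphs: one is obtained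
from the other by shifting an isomorphism from the merger to the contraction. -/
def PairEquiv {A B P P' : Type u} [Category.{v} A] [Category.{v} B]
    [Category.{v} P] [Category.{v} P']
    (μ : A ⥤ P) (κ : P ⥤ B) (μ' : A ⥤ P') (κ' : P' ⥤ B) : Prop :=
  ∃ (e : P ⥤ P') (e' : P' ⥤ P), e ⋙ e' = 𝟭 P ∧ e' ⋙ e = 𝟭 P' ∧
    μ ⋙ e = μ' ∧ e ⋙ κ' = κ

/-- A category contains no cycle of flags. -/
def NoFlagCycles (C : Type u) [Category.{v} C] : Prop :=
  ∀ (k : ℕ), 0 < k → ∀ (obj : Fin (k + 1) → C)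
    (flag : ∀ i : Fin k, obj i.castSucc ⟶ obj i.succ),
    (∀ i, IsFlag (flag i)) → obj 0 ≠ obj (Fin.last k)

/-!
The equivalence relation in a merger `μ` is forced to be the kernel of `μ` on objects, so a merger
is an admissible epi-functor through which every functor identifying the objects that `μ` identifies
factors uniquely. Each of these three properties is stable under composition: for the last one, a
functor that identifies whatever `μ₁ ⋙ μ₂` identifies factors through `μ₁`, and since `μ₁` is
surjective on objects the factor identifies whatever `μ₂` identifies, hence factors through `μ₂`.
-/

theorem IsId.map {C D : Type*} [Category* C] [Category* D] (φ : C ⥤ D) {A B : C} {f : A ⟶ B}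
    (hf : IsId f) : IsId (φ.map f) := by
  obtain ⟨rfl, rfl⟩ := hf
  exact ⟨rfl, φ.map_id A⟩

/-- The universal property of the quotient of `C` by the kernel of `φ` on objects: every functor
that identifies all objects identified by `φ` factors uniquely through `φ`. As in `IsQuotientBy`,
the test categories live in the universes of `C` and `D`. -/
def IsKernelQuotient {C D : Type u} [Category.{v} C] [Category.{v} D] (φ : C ⥤ D) : Prop :=
  ∀ (E : Type u) [Category.{v} E] (F : C ⥤ E),
    (∀ A B : C, φ.obj A = φ.obj B → F.obj A = F.obj B) → ∃! F' : D ⥤ E, φ ⋙ F' = F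

section Quotient

variable {C D : Type u} [Category.{v} C] [Category.{v} D] {φ : C ⥤ D}

theorem IsQuotientBy.isKernelQuotient {r : C → C → Prop} (hφ : IsQuotientBy r φ) :
    IsKernelQuotient φ := by
  obtain ⟨obj_eq_iff, -, -, factor⟩ := hφ
  exact fun E _ F hF => factor E F fun A B hAB => hF A B ((obj_eq_iff A B).2 (.rel A B hAB))

theorem IsKernelQuotient.isQuotientBy_ker (hφ : IsKernelQuotient φ) (hepi : IsEpiFunctor φ) :
    IsQuotientBy (Setoid.ker φ.obj) φ :=
  ⟨fun _ _ => (Setoid.ker φ.obj).iseqv.eqvGen_iff.symm, hepi.1, hepi.2, hφ⟩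

theorem isMerger_iff : IsMerger φ ↔ IsAdmissible φ ∧ IsEpiFunctor φ ∧ IsKernelQuotient φ := by
  constructor
  · rintro ⟨hadm, hepi, r, -, hquot⟩
    exact ⟨hadm, hepi, hquot.isKernelQuotient⟩
  · rintro ⟨hadm, hepi, hker⟩
    exact ⟨hadm, hepi, Setoid.ker φ.obj, (Setoid.ker φ.obj).iseqv, hker.isQuotientBy_ker hepi⟩

end Quotient

section Composition

variable {C D E : Type u} [Category.{v} C] [Category.{v} D] [Category.{v} E]
  {φ : C ⥤ D} {ψ : D ⥤ E}

theorem IsAdmissible.comp (hφ : IsAdmissible φ) (hψ : IsAdmissible ψ) :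
    IsAdmissible (φ ⋙ ψ) := by
  obtain ⟨map_irred, contracts_all⟩ := hφ
  constructor
  · intro A B f hf
    rcases map_irred f hf with hid | hirred
    · exact .inl (hid.map ψ)
    · exact hψ.1 (φ.map f) hirred
  · intro A B B' f g hf hg hfψ
    rcases map_irred f hf with hfid | hfirred
    · exact (contracts_all f g hf hg hfid).map ψ
    rcases map_irred g hg with hgid | hgirred
    · exact hgid.map ψ
    · exact hψ.2 (φ.map f) (φ.map g) hfirred hgirred hfψ

theorem GenBy.functor_map (ψ : D ⥤ E) {X Y : D} {f : X ⟶ Y} (hf : GenBy φ f) :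
    GenBy (φ ⋙ ψ) (ψ.map f) := by
  induction hf with
  | id X => exact ψ.map_id X ▸ .id (ψ.obj X)
  | map f => exact .map (φ := φ ⋙ ψ) f
  | comp f g _ _ hf hg => exact ψ.map_comp f g ▸ .comp _ _ hf hg

theorem IsEpiFunctor.comp (hφ : IsEpiFunctor φ) (hψ : IsEpiFunctor ψ) :
    IsEpiFunctor (φ ⋙ ψ) := by
  refine ⟨hψ.1.comp hφ.1, fun X Y f => ?_⟩
  induction hψ.2 f with
  | id X => exact .id X
  | map f => exact (hφ.2 f).functor_map ψ
  | comp f g _ _ hf hg => exact .comp f g hf hg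

theorem IsKernelQuotient.comp (hφ : IsKernelQuotient φ) (hψ : IsKernelQuotient ψ)
    (hsurj : Function.Surjective φ.obj) : IsKernelQuotient (φ ⋙ ψ) := by
  intro K _ F hF
  obtain ⟨F', rfl, F'_unique⟩ := hφ K F fun A B hAB => hF A B (congrArg ψ.obj hAB)
  have F'_identifies : ∀ X Y : D, ψ.obj X = ψ.obj Y → F'.obj X = F'.obj Y :=
    hsurj.forall₂.2 hF
  obtain ⟨F'', rfl, F''_unique⟩ := hψ K F' F'_identifies
  exact ⟨F'', rfl, fun G hG => F''_unique G (F'_unique (ψ ⋙ G) hG)⟩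

end Composition

theorem merger_comp_general {C D E : Type u} [Category.{v} C] [Category.{v} D] [Category.{v} E]
    {φ : C ⥤ D} {ψ : D ⥤ E} (hφ : IsMerger φ) (hψ : IsMerger ψ) : IsMerger (φ ⋙ ψ) := by
  obtain ⟨φ_adm, φ_epi, φ_quot⟩ := isMerger_iff.1 hφ
  obtain ⟨ψ_adm, ψ_epi, ψ_quot⟩ := isMerger_iff.1 hψ
  exact isMerger_iff.2 ⟨φ_adm.comp ψ_adm, φ_epi.comp ψ_epi, φ_quot.comp ψ_quot φ_epi.1⟩

/-- the composite of two mergers between nested graphs is a merger. -/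
theorem merger_comp {N₁ N₂ N₃ : Type u}
    [Category.{v} N₁] [Category.{v} N₂] [Category.{v} N₃]
    (h₁ : IsNestedGraph N₁) (h₂ : IsNestedGraph N₂) (h₃ : IsNestedGraph N₃)
    (μ₁ : N₁ ⥤ N₂) (μ₂ : N₂ ⥤ N₃)
    (hμ₁ : IsMerger μ₁) (hμ₂ : IsMerger μ₂) :
    IsMerger (μ₁ ⋙ μ₂) :=
  merger_comp_general hμ₁ hμ₂
end

section
/- Let κ : N₁ ⥤ N₂ be a contraction between nested graphs, let A₂ be a node of N₂, and let A₁ be the unique vertex of the fiber κ⁻¹(A₂). Then for every flag f₂ : A₂ → B₂ in N₂ there exists a flag f₁ : A₁ → B₁ in N₁, not contracted by κ, such that κ(f₁) divides f₂, i.e., f₂ = h ∘ κ(f₁) for some morphism h of N₂. -/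
open CategoryTheory

universe v u

/-!
Write `f₂` as a composite of images under `κ`; its first non-identity factor is `κ(g)` for some
`g : A ⟶ B`, so `κ(g)` divides `f₂`. The domain `A` lies over `A₂` but need not be the vertex of its
fiber. If it is not, it is the domain of a contracted flag, whose irreducible head is contracted
because identities of `N₂` have no nontrivial factors. Admissibility then makes the irreducible head
of `g` contracted too. Cancelling that head does not change `κ(g)` and moves `A` strictly forward
within its fiber, so the process stops, at the vertex.
-/

section Flags

variable {C : Type u} [Category.{v} C]

theorem IsId.comp_iff {A B X : C} {f : A ⟶ B} {g : B ⟶ X} (hf : IsId f) :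
    IsId (f ≫ g) ↔ IsId g := by
  obtain ⟨rfl, rfl⟩ := hf
  simp

theorem IsId.isSplitMono_of_comp {A B X : C} {f : A ⟶ B} {g : B ⟶ X} (hfg : IsId (f ≫ g)) :
    IsSplitMono f := by
  obtain ⟨rfl, hfg⟩ := hfg
  exact ⟨⟨g, hfg⟩⟩

/-- The precedence relation on nodes: some flag has domain `A` and codomain `B`. Well-foundedness
of this relation and of its converse are the two chain conditions that replace a grading. -/
def FlagRel (A B : C) : Prop :=
  ∃ f : A ⟶ B, IsFlag f

theorem IsFlag.exists_isIrred_comp (hC : WellFounded (FlagRel (C := C))) {A B : C} {f : A ⟶ B}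
    (hf : IsFlag f) : ∃ (X : C) (g : A ⟶ X) (h : X ⟶ B), IsIrred g ∧ g ≫ h = f := by
  induction B using hC.induction with
  | _ B ih =>
    by_cases hirr : IsIrred f
    · exact ⟨B, f, 𝟙 B, hirr, Category.comp_id f⟩
    · obtain ⟨X, g, h, hg, hh, rfl⟩ := not_not.mp fun hn => hirr ⟨hf, hn⟩
      obtain ⟨Y, p, q, hp, rfl⟩ := ih X ⟨h, hh⟩ hg
      exact ⟨Y, p, q ≫ h, hp, (Category.assoc p q h).symm⟩

theorem IsGrading.obj_lt {n : ℕ} {G : C ⥤ Fin n} (hG : IsGrading G) {A B : C}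
    (hAB : FlagRel A B) : G.obj A < G.obj B := by
  obtain ⟨f, hf⟩ := hAB
  exact lt_of_le_of_ne (leOfHom (G.map f)) fun h => hG f hf ⟨h, Subsingleton.elim _ _⟩

namespace IsNestedGraph

theorem wellFounded_flagRel (hC : IsNestedGraph C) : WellFounded (FlagRel (C := C)) := by
  obtain ⟨n, G, hG⟩ := hC
  exact Subrelation.wf hG.obj_lt (InvImage.wf G.obj wellFounded_lt)

theorem wellFounded_swap_flagRel (hC : IsNestedGraph C) :
    WellFounded (Function.swap (FlagRel (C := C))) := by
  obtain ⟨n, G, hG⟩ := hC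
  exact Subrelation.wf (fun hBA => hG.obj_lt hBA) (InvImage.wf G.obj wellFounded_gt)

theorem isId_of_isSplitMono (hC : IsNestedGraph C) ⦃A B : C⦄ (f : A ⟶ B) (hf : IsSplitMono f) :
    IsId f := by
  obtain ⟨n, G, hG⟩ := hC
  by_contra hflag
  exact (hG.obj_lt ⟨f, hflag⟩).not_ge (leOfHom (G.map (retraction f)))

end IsNestedGraph

end Flags

section Functors

variable {C D : Type u} [Category.{v} C] [Category.{v} D] {φ : C ⥤ D}

theorem IsId.contracts {A B : C} {f : A ⟶ B} (hf : IsId f) : Contracts φ f := by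
  obtain ⟨rfl, rfl⟩ := hf
  exact ⟨rfl, eqToHom_map φ rfl⟩

theorem Contracts.comp_iff {A B X : C} {f : A ⟶ B} {g : B ⟶ X} (hf : Contracts φ f) :
    Contracts φ (f ≫ g) ↔ Contracts φ g := by
  simpa only [Contracts, φ.map_comp] using IsId.comp_iff hf

theorem Contracts.left_of_comp (hD : ∀ ⦃X Y : D⦄ (s : X ⟶ Y), IsSplitMono s → IsId s)
    {A B X : C} {f : A ⟶ B} {g : B ⟶ X} (hfg : Contracts φ (f ≫ g)) : Contracts φ f := by
  rw [Contracts, φ.map_comp] at hfg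
  exact hD _ hfg.isSplitMono_of_comp

/-- Condition (2) in the definition of an admissible functor, on its own: the irreducible flags with
a given domain are either all contracted or all not contracted. -/
def ContractsUniformly (φ : C ⥤ D) : Prop :=
  ∀ ⦃A B B' : C⦄ (f : A ⟶ B) (g : A ⟶ B'), IsIrred f → IsIrred g → Contracts φ f → Contracts φ g

namespace ContractsUniformly

theorem contracts_of_not_isVertexOver (hC : WellFounded (FlagRel (C := C)))
    (hD : ∀ ⦃X Y : D⦄ (s : X ⟶ Y), IsSplitMono s → IsId s) (hφ : ContractsUniformly φ)
    {A B : C} (hA : ¬ IsVertexOver φ A) {g : A ⟶ B} (hg : IsIrred g) : Contracts φ g := by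
  obtain ⟨X, c, hc, hcflag⟩ : ∃ (X : C) (c : A ⟶ X), Contracts φ c ∧ IsFlag c := by
    simpa only [IsVertexOver, IsFlag, not_forall, exists_prop] using hA
  obtain ⟨Y, p, q, hp, rfl⟩ := hcflag.exists_isIrred_comp hC
  exact hφ p g hp hg (hc.left_of_comp hD)

theorem exists_contracts_comp_isVertexOver (hC : WellFounded (FlagRel (C := C)))
    (hC' : WellFounded (Function.swap (FlagRel (C := C))))
    (hD : ∀ ⦃X Y : D⦄ (s : X ⟶ Y), IsSplitMono s → IsId s) (hφ : ContractsUniformly φ)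
    {A B : C} {f : A ⟶ B} (hf : ¬ Contracts φ f) :
    ∃ (A' : C) (c : A ⟶ A') (f' : A' ⟶ B),
      Contracts φ c ∧ IsVertexOver φ A' ∧ c ≫ f' = f := by
  induction A using hC'.induction with
  | _ A ih =>
    by_cases hA : IsVertexOver φ A
    · exact ⟨A, 𝟙 A, f, IsId.contracts ⟨rfl, rfl⟩, hA, Category.id_comp f⟩
    · have hflag : IsFlag f := fun hid => hf hid.contracts
      obtain ⟨X, g, h, hg, rfl⟩ := hflag.exists_isIrred_comp hC
      have hgc : Contracts φ g := hφ.contracts_of_not_isVertexOver hC hD hA hg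
      obtain ⟨A', c, f', hc, hA', rfl⟩ := ih X ⟨g, hg.1⟩ (hf ∘ hgc.comp_iff.mpr)
      exact ⟨A', g ≫ c, f', hgc.comp_iff.mpr hc, hA', Category.assoc g c f'⟩

end ContractsUniformly

theorem GenBy.exists_not_contracts_map_comp {X Y : D} {f : X ⟶ Y} (hgen : GenBy φ f)
    (hf : IsFlag f) :
    ∃ (A B : C) (g : A ⟶ B) (e : φ.obj A = X) (h : φ.obj B ⟶ Y),
      ¬ Contracts φ g ∧ φ.map g ≫ h = eqToHom e ≫ f := by
  induction hgen with
  | id X => exact absurd ⟨rfl, rfl⟩ hf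
  | map g => exact ⟨_, _, g, rfl, 𝟙 _, hf, by simp⟩
  | comp p q _ _ ihp ihq =>
    by_cases hp : IsId p
    · obtain ⟨rfl, rfl⟩ := hp
      simp only [eqToHom_refl, Category.id_comp] at hf ⊢
      exact ihq hf
    · obtain ⟨A, B, g, e, h, hg, hgh⟩ := ihp hp
      exact ⟨A, B, g, e, h ≫ q, hg, by rw [reassoc_of% hgh]⟩

theorem contraction_flag_divides_general (hC : WellFounded (FlagRel (C := C)))
    (hC' : WellFounded (Function.swap (FlagRel (C := C))))
    (hD : ∀ ⦃X Y : D⦄ (s : X ⟶ Y), IsSplitMono s → IsId s) (hφ : ContractsUniformly φ)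
    {X Y : D} {f : X ⟶ Y} (hgen : GenBy φ f) (hf : IsFlag f) :
    ∃ (A : C) (hA : IsFiberVertex φ X A) (B : C) (g : A ⟶ B), IsFlag g ∧ ¬ Contracts φ g ∧
      ∃ h : φ.obj B ⟶ Y, φ.map g ≫ h = eqToHom hA.1 ≫ f := by
  obtain ⟨A, B, g, rfl, h, hg, hgh⟩ := hgen.exists_not_contracts_map_comp hf
  obtain ⟨A', c, g', hc, hA', rfl⟩ := hφ.exists_contracts_comp_isVertexOver hC hC' hD hg
  have hg' : ¬ Contracts φ g' := hg ∘ hc.comp_iff.mpr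
  obtain ⟨e, he⟩ := hc
  refine ⟨A', ⟨e.symm, hA'⟩, B, g', fun hid => hg' hid.contracts, hg', h, ?_⟩
  rw [← cancel_epi (eqToHom e)]
  simpa [he] using hgh

end Functors

/-- if `κ : N₁ ⥤ N₂` is a contraction, `A₂` a node of `N₂` and `A₁` the
vertex of the fiber `κ⁻¹ A₂`, then every flag `f₂ : A₂ ⟶ B₂` is divided by the image of
some flag `f₁ : A₁ ⟶ B₁` not contracted by `κ`, i.e. `f₂ = h ∘ κ(f₁)` for some `h`. -/
theorem contraction_flag_divides {N₁ N₂ : Type u}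
    [Category.{v} N₁] [Category.{v} N₂]
    (h₁ : IsNestedGraph N₁) (h₂ : IsNestedGraph N₂)
    (κ : N₁ ⥤ N₂) (hκ : IsContraction κ)
    (A₂ : N₂) (A₁ : N₁) (hA₁ : IsFiberVertex κ A₂ A₁)
    {B₂ : N₂} (f₂ : A₂ ⟶ B₂) (hf₂ : IsFlag f₂) :
    ∃ (B₁ : N₁) (f₁ : A₁ ⟶ B₁), IsFlag f₁ ∧ ¬ Contracts κ f₁ ∧
      ∃ h : κ.obj B₁ ⟶ B₂, κ.map f₁ ≫ h = eqToHom hA₁.1 ≫ f₂ := by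
  obtain ⟨A, hA, hdiv⟩ := contraction_flag_divides_general h₁.wellFounded_flagRel
    h₁.wellFounded_swap_flagRel h₂.isId_of_isSplitMono hκ.1.2 (hκ.2.1.2 f₂) hf₂
  obtain rfl := (hκ.2.2 A₂).unique hA hA₁
  exact hdiv
end
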